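/- Let m be a positive integer and a, c, d complex numbers with Re(c − a) > m, such that c, c − a and d are not nonpositive integers or zero and (1+a−c)_k ≠ 0 for 1 ≤ k ≤ m. Then Σ_{k=1}^∞ (a)_k (d+m)_k / ((c)_k (d)_k k) = ψ(c) − ψ(c−a) + m! · Σ_{k=1}^m (−1)^k (a)_k / (k (m−k)! (1+a−c)_k (d)_k). -/

import Mathlib

/-- The Pochhammer symbol `(a)_k = a (a+1) ⋯ (a+k-1)`. -/
noncomputable def poch (a : ℂ) (k : ℕ) : ℂ := Polynomial.eval a (ascPochhammer ℂ k)

/-- The digamma function `ψ(z) = Γ'(z)/Γ(z)`. -/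
noncomputable def digamma (z : ℂ) : ℂ := deriv Complex.Gamma z / Complex.Gamma z

/-!
Chu–Vandermonde expands `(d + m)_k / (d)_k` as a combination of the falling factorials of `k` of
order `j ≤ m`. For `j ≥ 1` the series weighted by `(a)_k / ((c)_k k)` telescopes, giving the finite
sum. For `j = 0` both the series and `ψ(c) - ψ(c - a)` change by the same rational function under
`c ↦ c + 1`, and the series tends to `0` as `c` runs to infinity along integer shifts. What remains
is Euler's formula `ψ(z) = lim (log n - ∑_{j ≤ n} 1 / (z + j))`, the logarithmic derivative of his
product for `Γ`. That derivative may be taken termwise because the error `Γ - Γ_n` is the Mellin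
transform of a nonnegative function, hence is bounded on a vertical strip by its values at two real
points.
-/

open Filter Topology Asymptotics MeasureTheory Set

section Pochhammer

lemma poch_zero (a : ℂ) : poch a 0 = 1 := by simp [poch]

lemma poch_one (a : ℂ) : poch a 1 = a := by simp [poch]

lemma poch_succ (a : ℂ) (n : ℕ) : poch a (n + 1) = poch a n * (a + n) :=
  ascPochhammer_succ_eval n a

lemma poch_succ_left (a : ℂ) (n : ℕ) : poch a (n + 1) = a * poch (a + 1) n := by
  simp [poch, ascPochhammer_succ_left]

lemma poch_add (a : ℂ) (m n : ℕ) : poch a (m + n) = poch a m * poch (a + m) n := by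
  simp [poch, ← ascPochhammer_mul]

lemma poch_eq_prod_range (a : ℂ) (n : ℕ) : poch a n = ∏ j ∈ Finset.range n, (a + j) := by
  induction n with
  | zero => exact poch_zero a
  | succ n ih => rw [poch_succ, ih, Finset.prod_range_succ]

lemma poch_ne_zero_iff {a : ℂ} {n : ℕ} : poch a n ≠ 0 ↔ ∀ j < n, a + j ≠ 0 := by
  simp [poch_eq_prod_range, Finset.prod_ne_zero_iff]

lemma add_natCast_ne_zero {c : ℂ} (hc : ∀ n : ℕ, c ≠ -n) (n : ℕ) : c + n ≠ 0 :=
  fun h => hc n (eq_neg_of_add_eq_zero_left h)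

lemma poch_ne_zero {c : ℂ} (hc : ∀ n : ℕ, c ≠ -n) (n : ℕ) : poch c n ≠ 0 :=
  poch_ne_zero_iff.2 fun j _ => add_natCast_ne_zero hc j

lemma add_natCast_ne_neg_natCast {c : ℂ} (hc : ∀ n : ℕ, c ≠ -n) (k n : ℕ) : c + k ≠ -n :=
  fun h => hc (n + k) (by push_cast; linear_combination h)

lemma add_one_ne_neg_natCast {c : ℂ} (hc : ∀ n : ℕ, c ≠ -n) (n : ℕ) : c + 1 ≠ -n := by
  simpa using add_natCast_ne_neg_natCast hc 1 n

lemma ne_neg_natCast_of_re_pos {c : ℂ} (hc : 0 < c.re) (n : ℕ) : c ≠ -n := by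
  rintro rfl
  simp only [Complex.neg_re, Complex.natCast_re] at hc
  linarith [n.cast_nonneg (α := ℝ)]

lemma natCast_descFactorial_succ (n j : ℕ) :
    (n.descFactorial (j + 1) : ℂ) = (n - j) * n.descFactorial j := by
  rw [Nat.descFactorial_succ]
  rcases le_or_gt j n with h | h
  · rw [Nat.cast_mul, Nat.cast_sub h]
  · simp [Nat.descFactorial_of_lt h]

lemma poch_eq_smeval_descPochhammer (a : ℂ) (n : ℕ) :
    poch a n = (descPochhammer ℤ n).smeval (a + n - 1) := by
  rw [Polynomial.descPochhammer_smeval_eq_ascPochhammer, Polynomial.ascPochhammer_smeval_eq_eval,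
    poch]
  congr 1
  ring

/- The Chu–Vandermonde identity for the falling factorial `(m + (d + k - 1))_k`. -/
lemma poch_add_natCast_eq_sum (d : ℂ) (m k : ℕ) :
    poch (d + m) k =
      ∑ j ∈ Finset.range (k + 1), (k.choose j * m.descFactorial j : ℂ) * poch (d + j) (k - j) := by
  have hsplit : d + m + k - 1 = m + (d + k - 1) := by ring
  rw [poch_eq_smeval_descPochhammer, hsplit,
    Ring.descPochhammer_smeval_add k (Commute.all _ _),
    Finset.Nat.sum_antidiagonal_eq_sum_range_succ_mk]
  refine Finset.sum_congr rfl fun j hj => ?_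
  have hjk : j ≤ k := Finset.mem_range_succ_iff.1 hj
  rw [Polynomial.descPochhammer_smeval_eq_descFactorial, poch_eq_smeval_descPochhammer,
    Nat.cast_sub hjk, mul_assoc, add_add_sub_cancel]

lemma choose_mul_descFactorial_comm (k m j : ℕ) :
    k.choose j * m.descFactorial j = m.choose j * k.descFactorial j := by
  rw [Nat.descFactorial_eq_factorial_mul_choose, Nat.descFactorial_eq_factorial_mul_choose]
  ring

lemma poch_add_natCast_div_poch {d : ℂ} (hd : ∀ n : ℕ, d ≠ -n) (m k : ℕ) :
    poch (d + m) k / poch d k =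
      ∑ j ∈ Finset.range (m + 1), (m.choose j * k.descFactorial j : ℂ) / poch d j := by
  rw [poch_add_natCast_eq_sum, Finset.sum_div]
  refine Finset.sum_congr_of_eq_on_inter (fun j _ hj => ?_) (fun j _ hj => ?_) fun j hj _ => ?_
  · have hmj : m < j := by simpa using hj
    simp [Nat.descFactorial_of_lt hmj]
  · have hkj : k < j := by simpa using hj
    simp [Nat.descFactorial_of_lt hkj]
  · have hjk : j ≤ k := Finset.mem_range_succ_iff.1 hj
    have hcomm : (k.choose j * m.descFactorial j : ℂ) = m.choose j * k.descFactorial j := by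
      exact_mod_cast choose_mul_descFactorial_comm k m j
    have hpoch : poch d k = poch d j * poch (d + j) (k - j) := by
      rw [← poch_add, Nat.add_sub_cancel' hjk]
    rw [hcomm, hpoch,
      mul_div_mul_right _ _ (poch_ne_zero (add_natCast_ne_neg_natCast hd j) (k - j))]

end Pochhammer

section Asymptotics

lemma poch_succ_eq_mul_inv_GammaSeq (z : ℂ) {n : ℕ} (hn : n ≠ 0) :
    poch z (n + 1) = (n : ℂ) ^ z * n.factorial * (Complex.GammaSeq z n)⁻¹ := by
  have hpow : (n : ℂ) ^ z ≠ 0 := by simp [Complex.cpow_eq_zero_iff, hn]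
  have hfact : (n.factorial : ℂ) ≠ 0 := Nat.cast_ne_zero.2 n.factorial_ne_zero
  rw [Complex.GammaSeq, ← poch_eq_prod_range, inv_div, mul_div_cancel₀ _ (mul_ne_zero hpow hfact)]

lemma tendsto_inv_GammaSeq (z : ℂ) :
    Tendsto (fun n => (Complex.GammaSeq z n)⁻¹) atTop (𝓝 (Complex.Gamma z)⁻¹) := by
  by_cases hz : ∃ N : ℕ, z = -N
  · obtain ⟨N, rfl⟩ := hz
    rw [Complex.Gamma_neg_nat_eq_zero, inv_zero]
    refine tendsto_const_nhds.congr' ?_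
    filter_upwards [eventually_ge_atTop N] with n hn
    have hprod : ∏ j ∈ Finset.range (n + 1), (-(N : ℂ) + j) = 0 :=
      Finset.prod_eq_zero (Finset.mem_range_succ_iff.2 hn) (neg_add_cancel _)
    rw [Complex.GammaSeq, hprod, div_zero, inv_zero]
  · push Not at hz
    exact (Complex.GammaSeq_tendsto_Gamma z).inv₀ (Complex.Gamma_ne_zero hz)

lemma tendsto_cpow_mul_poch_div_poch (a c : ℂ) :
    Tendsto (fun n : ℕ => (n : ℂ) ^ (c - a) * (poch a (n + 1) / poch c (n + 1))) atTop
      (𝓝 (Complex.Gamma c / Complex.Gamma a)) := by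
  have hlim := (Complex.GammaSeq_tendsto_Gamma c).mul (tendsto_inv_GammaSeq a)
  refine hlim.congr' ?_
  filter_upwards [eventually_ne_atTop 0] with n hn
  have hnC : (n : ℂ) ≠ 0 := Nat.cast_ne_zero.2 hn
  have hfact : (n.factorial : ℂ) ≠ 0 := Nat.cast_ne_zero.2 n.factorial_ne_zero
  have hpow : ∀ s : ℂ, (n : ℂ) ^ s ≠ 0 := fun s => by simp [Complex.cpow_eq_zero_iff, hn]
  have hpa := hpow a
  have hpc := hpow c
  rw [poch_succ_eq_mul_inv_GammaSeq a hn, poch_succ_eq_mul_inv_GammaSeq c hn,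
    Complex.cpow_sub _ _ hnC]
  field_simp

lemma poch_div_poch_isBigO (a c : ℂ) :
    (fun n : ℕ => poch a (n + 1) / poch c (n + 1)) =O[atTop]
      fun n : ℕ => (n : ℝ) ^ (-(c - a).re) := by
  have hpow : (fun n : ℕ => (n : ℂ) ^ (a - c)) =O[atTop] fun n : ℕ => (n : ℝ) ^ (-(c - a).re) := by
    refine IsBigO.of_norm_eventuallyLE ?_
    filter_upwards [eventually_gt_atTop 0] with n hn
    rw [Complex.norm_natCast_cpow_of_pos hn, ← Complex.neg_re, neg_sub]
  have hmul := hpow.mul ((tendsto_cpow_mul_poch_div_poch a c).isBigO_one ℝ)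
  simp only [mul_one] at hmul
  refine hmul.congr' ?_ EventuallyEq.rfl
  filter_upwards [eventually_ne_atTop 0] with n hn
  rw [← mul_assoc, ← Complex.cpow_add _ _ (Nat.cast_ne_zero.2 hn), sub_add_sub_cancel, sub_self,
    Complex.cpow_zero, one_mul]

variable {a c : ℂ} {f : ℕ → ℂ} {s : ℝ}

lemma poch_div_poch_mul_isBigO (a c : ℂ) (hf : f =O[atTop] fun n : ℕ => (n : ℝ) ^ s) :
    (fun n : ℕ => poch a (n + 1) / poch c (n + 1) * f n) =O[atTop]
      fun n : ℕ => (n : ℝ) ^ (-((c - a).re - s)) := by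
  refine ((poch_div_poch_isBigO a c).mul hf).congr' EventuallyEq.rfl ?_
  filter_upwards [eventually_gt_atTop 0] with n hn
  rw [← Real.rpow_add (Nat.cast_pos.2 hn), neg_sub, neg_add_eq_sub]

lemma summable_poch_div_poch_mul (hf : f =O[atTop] fun n : ℕ => (n : ℝ) ^ s)
    (hs : s + 1 < (c - a).re) : Summable fun n : ℕ => poch a (n + 1) / poch c (n + 1) * f n :=
  summable_of_isBigO_nat (Real.summable_nat_rpow.2 (by linarith)) (poch_div_poch_mul_isBigO a c hf)

lemma tendsto_poch_div_poch_mul_zero (hf : f =O[atTop] fun n : ℕ => (n : ℝ) ^ s)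
    (hs : s < (c - a).re) :
    Tendsto (fun n : ℕ => poch a (n + 1) / poch c (n + 1) * f n) atTop (𝓝 0) :=
  (poch_div_poch_mul_isBigO a c hf).trans_tendsto
    ((tendsto_rpow_neg_atTop (sub_pos.2 hs)).comp tendsto_natCast_atTop_atTop)

lemma descFactorial_isBigO (j : ℕ) :
    (fun n : ℕ => (n.descFactorial j : ℂ)) =O[atTop] fun n : ℕ => (n : ℝ) ^ (j : ℝ) := by
  refine IsBigO.of_norm_le fun n => ?_
  rw [Complex.norm_natCast, Real.rpow_natCast]
  exact_mod_cast Nat.descFactorial_le_pow n j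

lemma const_add_natCast_isBigO (c : ℂ) :
    (fun n : ℕ => c + n) =O[atTop] fun n : ℕ => (n : ℝ) ^ (1 : ℝ) := by
  simp only [Real.rpow_one]
  refine IsBigO.add ?_ (IsBigO.of_norm_le fun n => (Complex.norm_natCast n).le)
  exact (isLittleO_const_left.2 (.inr (tendsto_norm_atTop_atTop.comp
    tendsto_natCast_atTop_atTop))).isBigO

lemma inv_natCast_add_one_isBigO :
    (fun n : ℕ => ((n : ℂ) + 1)⁻¹) =O[atTop] fun n : ℕ => (n : ℝ) ^ (-1 : ℝ) := by
  refine IsBigO.of_norm_eventuallyLE ?_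
  filter_upwards [eventually_gt_atTop 0] with n hn
  rw [norm_inv, ← Nat.cast_add_one, Complex.norm_natCast, Real.rpow_neg_one]
  exact inv_anti₀ (Nat.cast_pos.2 hn) (Nat.cast_le.2 n.le_succ)

lemma summable_poch_div_poch_mul_descFactorial {j : ℕ} (h : j + 1 < (c - a).re) :
    Summable fun n : ℕ => poch a (n + 1) / poch c (n + 1) * n.descFactorial j :=
  summable_poch_div_poch_mul (descFactorial_isBigO j) h

lemma summable_poch_div_poch_div (h : 0 < (c - a).re) :
    Summable fun n : ℕ => poch a (n + 1) / poch c (n + 1) / (n + 1) := by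
  simp only [div_eq_mul_inv _ ((_ : ℂ) + 1)]
  exact summable_poch_div_poch_mul inv_natCast_add_one_isBigO (by linarith)

end Asymptotics

section FactorialMoments

lemma hasSum_of_telescoping {E : Type*} [AddCommGroup E] [TopologicalSpace E] [T2Space E]
    [IsTopologicalAddGroup E] {f G : ℕ → E} (hf : Summable f) (hG : Tendsto G atTop (𝓝 0))
    (h : ∀ n, G (n + 1) - G n = f n) : HasSum f (-G 0) := by
  rw [hf.hasSum_iff_tendsto_nat]
  simpa only [← h, Finset.sum_range_sub, zero_sub] using hG.sub_const (G 0)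

lemma poch_div_poch_succ_mul {c : ℂ} (hc : ∀ n : ℕ, c ≠ -n) (a : ℂ) (n : ℕ) :
    poch a (n + 1) / poch c (n + 1) * (c + n) = poch a n / poch c n * (a + n) := by
  have hpoch := poch_ne_zero hc n
  have hadd := add_natCast_ne_zero hc n
  rw [poch_succ, poch_succ]
  field_simp

variable {a c : ℂ}

lemma one_add_sub_add_natCast_ne_zero {j : ℕ} (h : j + 1 < (c - a).re) : 1 + a - c + j ≠ 0 := by
  intro h0
  have hca : c - a = j + 1 := by linear_combination -h0
  simp [hca] at h

lemma tendsto_poch_div_poch_mul_descFactorial_mul {j : ℕ} (h : j + 1 < (c - a).re) :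
    Tendsto (fun n : ℕ => poch a (n + 1) / poch c (n + 1) * (n.descFactorial j * (c + n)))
      atTop (𝓝 0) := by
  refine tendsto_poch_div_poch_mul_zero (s := j + 1) (IsBigO.congr'
    ((descFactorial_isBigO j).mul (const_add_natCast_isBigO c)) EventuallyEq.rfl ?_) h
  filter_upwards [eventually_gt_atTop 0] with n hn
  rw [Real.rpow_add (Nat.cast_pos.2 hn)]

lemma hasSum_poch_div_poch (hc : ∀ n : ℕ, c ≠ -n) (h : 1 < (c - a).re) :
    HasSum (fun n : ℕ => poch a (n + 1) / poch c (n + 1)) (a / (c - a - 1)) := by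
  have h' : ((0 : ℕ) : ℝ) + 1 < (c - a).re := by simpa using h
  have hne : 1 + a - c ≠ 0 := by simpa using one_add_sub_add_natCast_ne_zero h'
  have hne' : c - a - 1 ≠ 0 := fun h0 => hne (by linear_combination -h0)
  have hsum : Summable fun n : ℕ => poch a (n + 1) / poch c (n + 1) := by
    simpa using summable_poch_div_poch_mul_descFactorial h'
  have htendsto :
      Tendsto (fun n : ℕ => poch a (n + 1) / poch c (n + 1) * (c + n)) atTop (𝓝 0) := by
    simpa using tendsto_poch_div_poch_mul_descFactorial_mul h'
  have htele := hasSum_of_telescoping (hsum.mul_left (1 + a - c)) htendsto fun n => by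
    rw [poch_div_poch_succ_mul hc]
    push_cast
    ring
  have hvalue : -(poch a (0 + 1) / poch c (0 + 1) * (c + (0 : ℕ)))
      = (1 + a - c) * (a / (c - a - 1)) := by
    rw [poch_div_poch_succ_mul hc, poch_zero, poch_zero, Nat.cast_zero]
    field_simp
    ring
  rwa [hvalue, hasSum_mul_left_iff hne] at htele

lemma hasSum_poch_div_poch_mul_descFactorial_succ (hc : ∀ n : ℕ, c ≠ -n) {j : ℕ}
    (h : (j + 1 : ℕ) + 1 < (c - a).re) {S : ℂ}
    (hS : HasSum (fun n : ℕ => poch a (n + 1) / poch c (n + 1) * n.descFactorial j) S) :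
    HasSum (fun n : ℕ => poch a (n + 1) / poch c (n + 1) * n.descFactorial (j + 1))
      (-((j + 1) * (a + (j + 1 : ℕ)) * S) / (1 + a - c + (j + 1 : ℕ))) := by
  have hne := one_add_sub_add_natCast_ne_zero h
  have hsum := (summable_poch_div_poch_mul_descFactorial h).mul_left (1 + a - c + (j + 1 : ℕ))
  have hlower := hS.mul_left ((j + 1) * (a + (j + 1 : ℕ)))
  have htele := hasSum_of_telescoping (hsum.add hlower.summable)
    (tendsto_poch_div_poch_mul_descFactorial_mul h) fun n => by
      rw [← mul_assoc, mul_right_comm, poch_div_poch_succ_mul hc, Nat.succ_descFactorial_succ,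
        natCast_descFactorial_succ]
      push_cast
      ring
  rw [Nat.zero_descFactorial_succ, Nat.cast_zero, zero_mul, mul_zero, neg_zero] at htele
  rw [← hasSum_mul_left_iff hne, mul_div_cancel₀ _ hne]
  simpa using htele.sub hlower

lemma hasSum_poch_div_poch_mul_descFactorial (hc : ∀ n : ℕ, c ≠ -n) {j : ℕ}
    (h : j + 1 < (c - a).re) :
    HasSum (fun n : ℕ => poch a (n + 1) / poch c (n + 1) * n.descFactorial j)
      ((-1) ^ (j + 1) * j.factorial * poch a (j + 1) / poch (1 + a - c) (j + 1)) := by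
  induction j with
  | zero =>
    have hne : 1 + a - c ≠ 0 := by simpa using one_add_sub_add_natCast_ne_zero h
    have hne' : c - a - 1 ≠ 0 := fun h0 => hne (by linear_combination -h0)
    convert hasSum_poch_div_poch hc (by simpa using h) using 1
    · simp
    · rw [zero_add, poch_one, poch_one, Nat.factorial_zero]
      field_simp
      ring
  | succ j ih =>
    have hj : (j : ℝ) + 1 < (c - a).re := by push_cast at h; linarith
    convert hasSum_poch_div_poch_mul_descFactorial_succ hc h (ih hj) using 1
    rw [poch_succ a (j + 1), poch_succ _ (j + 1), Nat.factorial_succ, mul_comm (poch (1 + a - c) _),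
      ← div_div]
    push_cast
    ring

end FactorialMoments

section Digamma

/-- The error `e^{-x} - (1 - x/n)^n` of the `n`-th Euler approximation to the Gamma kernel, the
power being cut off at `x = n`; its Mellin transform is `Γ(z)` minus the `n`-th Euler product. -/
noncomputable def expDefect (n : ℕ) (x : ℝ) : ℝ :=
  Real.exp (-x) - (Iic (n : ℝ)).indicator (fun y => (1 - y / n) ^ n) x

lemma expDefect_nonneg (n : ℕ) (x : ℝ) : 0 ≤ expDefect n x := by
  rw [expDefect, sub_nonneg]
  exact indicator_le' (fun _ hx => Real.one_sub_div_pow_le_exp_neg hx)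
    (fun _ _ => (Real.exp_pos _).le) x

variable {z : ℂ} {n : ℕ}

lemma expDefect_mul_cpow (n : ℕ) (x : ℝ) (z : ℂ) :
    (expDefect n x : ℂ) * (x : ℂ) ^ (z - 1) = (Real.exp (-x) : ℂ) * (x : ℂ) ^ (z - 1) -
      (Iic (n : ℝ)).indicator (fun y => (((1 - y / n) ^ n : ℝ) : ℂ) * (y : ℂ) ^ (z - 1)) x := by
  by_cases hx : x ∈ Iic (n : ℝ) <;> simp [expDefect, hx, sub_mul]

lemma integrableOn_indicator_one_sub_div_pow_mul_cpow (hz : 0 < z.re) (n : ℕ) :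
    IntegrableOn ((Iic (n : ℝ)).indicator
      fun x => (((1 - x / n) ^ n : ℝ) : ℂ) * (x : ℂ) ^ (z - 1)) (Ioi 0) := by
  rw [IntegrableOn, integrable_indicator_iff measurableSet_Iic, IntegrableOn,
    Measure.restrict_restrict measurableSet_Iic, inter_comm, Ioi_inter_Iic, ← IntegrableOn,
    ← intervalIntegrable_iff_integrableOn_Ioc_of_le n.cast_nonneg]
  exact (intervalIntegral.intervalIntegrable_cpow' (by simpa using hz)).continuousOn_mul
    (by fun_prop)

lemma integrableOn_expDefect_mul_cpow (hz : 0 < z.re) (n : ℕ) :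
    IntegrableOn (fun x : ℝ => (expDefect n x : ℂ) * (x : ℂ) ^ (z - 1)) (Ioi 0) := by
  simp only [expDefect_mul_cpow]
  exact (Complex.GammaIntegral_convergent hz).sub
    (integrableOn_indicator_one_sub_div_pow_mul_cpow hz n)

lemma Gamma_sub_GammaSeq_eq_integral (hz : 0 < z.re) (hn : n ≠ 0) :
    Complex.Gamma z - Complex.GammaSeq z n =
      ∫ x : ℝ in Ioi 0, (expDefect n x : ℂ) * (x : ℂ) ^ (z - 1) := by
  simp only [expDefect_mul_cpow]
  rw [integral_sub (Complex.GammaIntegral_convergent hz)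
      (integrableOn_indicator_one_sub_div_pow_mul_cpow hz n),
    setIntegral_indicator measurableSet_Iic, Ioi_inter_Iic,
    ← intervalIntegral.integral_of_le n.cast_nonneg,
    ← Complex.GammaSeq_eq_approx_Gamma_integral hz hn, Complex.Gamma_eq_integral hz,
    Complex.GammaIntegral]

lemma norm_expDefect_mul_cpow (n : ℕ) {x : ℝ} (hx : 0 < x) (z : ℂ) :
    ‖(expDefect n x : ℂ) * (x : ℂ) ^ (z - 1)‖ = expDefect n x * x ^ (z.re - 1) := by
  rw [norm_mul, Complex.norm_of_nonneg (expDefect_nonneg n x),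
    Complex.norm_cpow_eq_rpow_re_of_pos hx, Complex.sub_re, Complex.one_re]

lemma integrableOn_expDefect_mul_rpow {p : ℝ} (hp : 0 < p) (n : ℕ) :
    IntegrableOn (fun x => expDefect n x * x ^ (p - 1)) (Ioi 0) :=
  IntegrableOn.congr_fun (integrableOn_expDefect_mul_cpow (z := p) hp n).norm
    (fun _ hx => norm_expDefect_mul_cpow n hx p) measurableSet_Ioi

lemma Gamma_sub_GammaSeq_ofReal {p : ℝ} (hp : 0 < p) (hn : n ≠ 0) :
    Complex.Gamma p - Complex.GammaSeq p n =
      ((∫ x in Ioi 0, expDefect n x * x ^ (p - 1) : ℝ) : ℂ) := by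
  rw [Gamma_sub_GammaSeq_eq_integral (by simpa using hp) hn, ← integral_complex_ofReal]
  refine setIntegral_congr_fun measurableSet_Ioi fun x hx => ?_
  simp [Complex.ofReal_cpow (le_of_lt hx)]

lemma tendsto_integral_expDefect_mul_rpow {p : ℝ} (hp : 0 < p) :
    Tendsto (fun n : ℕ => ∫ x in Ioi 0, expDefect n x * x ^ (p - 1)) atTop (𝓝 0) := by
  have hlim := ((Complex.GammaSeq_tendsto_Gamma p).const_sub (Complex.Gamma p)).congr' <|
    (eventually_ne_atTop 0).mono fun n hn => Gamma_sub_GammaSeq_ofReal hp hn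
  rw [sub_self] at hlim
  exact (Complex.continuous_re.tendsto 0).comp hlim

lemma rpow_le_rpow_add_rpow {x p q r : ℝ} (hx : 0 < x) (hpr : p ≤ r) (hrq : r ≤ q) :
    x ^ r ≤ x ^ p + x ^ q := by
  rcases le_total x 1 with h | h
  · exact (Real.rpow_le_rpow_of_exponent_ge hx h hpr).trans
      (le_add_of_nonneg_right (Real.rpow_nonneg hx.le q))
  · exact (Real.rpow_le_rpow_of_exponent_le h hrq).trans
      (le_add_of_nonneg_left (Real.rpow_nonneg hx.le p))

lemma norm_Gamma_sub_GammaSeq_le {p q : ℝ} (hp : 0 < p) (hpz : p ≤ z.re) (hzq : z.re ≤ q)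
    (hn : n ≠ 0) :
    ‖Complex.Gamma z - Complex.GammaSeq z n‖ ≤
      (∫ x in Ioi 0, expDefect n x * x ^ (p - 1)) +
        ∫ x in Ioi 0, expDefect n x * x ^ (q - 1) := by
  have hz : 0 < z.re := hp.trans_le hpz
  have hip := integrableOn_expDefect_mul_rpow hp n
  have hiq := integrableOn_expDefect_mul_rpow (hz.trans_le hzq) n
  rw [Gamma_sub_GammaSeq_eq_integral hz hn, ← integral_add hip hiq]
  refine norm_integral_le_of_norm_le (hip.add hiq) ?_
  filter_upwards [self_mem_ae_restrict measurableSet_Ioi] with x hx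
  rw [norm_expDefect_mul_cpow n hx, ← mul_add]
  gcongr
  · exact expDefect_nonneg n x
  · exact rpow_le_rpow_add_rpow hx (by linarith) (by linarith)

lemma tendstoUniformlyOn_GammaSeq {p q : ℝ} (hp : 0 < p) (hq : 0 < q) :
    TendstoUniformlyOn (fun n z => Complex.GammaSeq z n) Complex.Gamma atTop
      {z | p ≤ z.re ∧ z.re ≤ q} := by
  have hlim :=
    (tendsto_integral_expDefect_mul_rpow hp).add (tendsto_integral_expDefect_mul_rpow hq)
  rw [add_zero] at hlim
  rw [Metric.tendstoUniformlyOn_iff]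
  intro ε hε
  filter_upwards [hlim.eventually_lt_const hε, eventually_ne_atTop 0] with n hlt hn z hz
  rw [dist_eq_norm]
  exact (norm_Gamma_sub_GammaSeq_le hp hz.1 hz.2 hn).trans_lt hlt

lemma tendstoLocallyUniformlyOn_GammaSeq :
    TendstoLocallyUniformlyOn (fun n z => Complex.GammaSeq z n) Complex.Gamma atTop
      {z | 0 < z.re} := by
  refine tendstoLocallyUniformlyOn_of_forall_exists_nhds fun z (hz : 0 < z.re) =>
    ⟨_, mem_nhdsWithin_of_mem_nhds ?_,
      tendstoUniformlyOn_GammaSeq (half_pos hz) (add_pos hz one_pos)⟩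
  exact Complex.continuous_re.continuousAt.preimage_mem_nhds
    (Icc_mem_nhds (half_lt_self hz) (lt_add_one _))

lemma differentiableAt_GammaSeq (hz : ∀ n : ℕ, z ≠ -n) (hn : n ≠ 0) :
    DifferentiableAt ℂ (fun w => Complex.GammaSeq w n) z := by
  have hnC : (n : ℂ) ≠ 0 := Nat.cast_ne_zero.2 hn
  unfold Complex.GammaSeq
  refine DifferentiableAt.div ?_ (by fun_prop)
    (Finset.prod_ne_zero_iff.2 fun j _ => add_natCast_ne_zero hz j)
  exact (differentiableAt_id.const_cpow (.inl hnC)).mul_const _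

lemma logDeriv_GammaSeq (hz : ∀ n : ℕ, z ≠ -n) (hn : n ≠ 0) :
    logDeriv (fun w => Complex.GammaSeq w n) z =
      Complex.log n - ∑ j ∈ Finset.range (n + 1), 1 / (z + j) := by
  have hnC : (n : ℂ) ≠ 0 := Nat.cast_ne_zero.2 hn
  have hfact : (n.factorial : ℂ) ≠ 0 := Nat.cast_ne_zero.2 n.factorial_ne_zero
  have hpow : (n : ℂ) ^ z ≠ 0 := by simp [Complex.cpow_eq_zero_iff, hn]
  have hadd : ∀ j ∈ Finset.range (n + 1), z + j ≠ 0 := fun j _ => add_natCast_ne_zero hz j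
  have hderiv : HasDerivAt (fun w : ℂ => (n : ℂ) ^ w) ((n : ℂ) ^ z * Complex.log n) z := by
    simpa using (hasDerivAt_id z).const_cpow (.inl hnC)
  unfold Complex.GammaSeq
  rw [logDeriv_div (f := fun w => (n : ℂ) ^ w * n.factorial)
      (g := fun w => ∏ j ∈ Finset.range (n + 1), (w + j)) z (mul_ne_zero hpow hfact)
      (Finset.prod_ne_zero_iff.2 hadd) (hderiv.differentiableAt.mul_const _) (by fun_prop),
    logDeriv_mul_const (f := fun w => (n : ℂ) ^ w) z _ hfact, logDeriv_prod hadd (by fun_prop),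
    logDeriv_apply, hderiv.deriv, mul_div_cancel_left₀ _ hpow]
  simp [logDeriv_apply]

lemma tendsto_log_sub_sum_digamma (hz : 0 < z.re) :
    Tendsto (fun n : ℕ => Complex.log n - ∑ j ∈ Finset.range (n + 1), 1 / (z + j)) atTop
      (𝓝 (digamma z)) := by
  have hlim : Tendsto (fun n => logDeriv (fun w => Complex.GammaSeq w n) z) atTop
      (𝓝 (digamma z)) :=
    Complex.logDeriv_tendsto (isOpen_lt continuous_const Complex.continuous_re) hz
      tendstoLocallyUniformlyOn_GammaSeq
      ((eventually_ne_atTop 0).mono fun n hn w hw =>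
        (differentiableAt_GammaSeq (ne_neg_natCast_of_re_pos hw) hn).differentiableWithinAt)
      (Complex.Gamma_ne_zero_of_re_pos hz)
  exact hlim.congr' <| (eventually_ne_atTop 0).mono fun n hn =>
    logDeriv_GammaSeq (ne_neg_natCast_of_re_pos hz) hn

lemma digamma_add_one (hz : ∀ n : ℕ, z ≠ -n) : digamma (z + 1) = digamma z + 1 / z := by
  rw [one_div]
  exact Complex.digamma_apply_add_one z hz

end Digamma

section DigammaSeries

/-- The `m = 0` series `Σ_{k ≥ 1} (a)_k / ((c)_k k)`, indexed by `n = k - 1`, whose value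
is the digamma difference `ψ(c) - ψ(c - a)`. -/
noncomputable def digammaSeries (a c : ℂ) : ℂ :=
  ∑' n : ℕ, poch a (n + 1) / poch c (n + 1) / (n + 1)

lemma poch_div_poch_div_sub_add_one {c : ℂ} (hc : ∀ n : ℕ, c ≠ -n) (a : ℂ) (n : ℕ) :
    poch a (n + 1) / poch c (n + 1) / (n + 1) - poch a (n + 1) / poch (c + 1) (n + 1) / (n + 1) =
      1 / c * (poch a (n + 1) / poch (c + 1) (n + 1)) := by
  have hc0 : c ≠ 0 := by simpa using hc 0
  have hn : (n : ℂ) + 1 ≠ 0 := Nat.cast_add_one_ne_zero n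
  have hpoch := poch_ne_zero hc (n + 1)
  have hpoch' := poch_ne_zero (add_one_ne_neg_natCast hc) (n + 1)
  have hshift : c * poch (c + 1) (n + 1) = poch c (n + 1) * (c + (n + 1 : ℕ)) := by
    rw [← poch_succ_left, poch_succ]
  push_cast at hshift
  field_simp
  linear_combination poch a (n + 1) * hshift

variable {a c : ℂ}

lemma digammaSeries_eq_add_one_add (hc : ∀ n : ℕ, c ≠ -n) (h : 0 < (c - a).re) :
    digammaSeries a c = digammaSeries a (c + 1) + (1 / (c - a) - 1 / c) := by
  have hc0 : c ≠ 0 := by simpa using hc 0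
  have hca : c - a ≠ 0 := by simpa using ne_neg_natCast_of_re_pos h 0
  have hre : (c + 1 - a).re = (c - a).re + 1 := by
    rw [add_sub_right_comm, Complex.add_re, Complex.one_re]
  have hdiff := (hasSum_poch_div_poch (a := a) (add_one_ne_neg_natCast hc)
    (by linarith)).mul_left (1 / c)
  simp only [← poch_div_poch_div_sub_add_one hc] at hdiff
  have hvalue : 1 / c * (a / (c + 1 - a - 1)) = 1 / (c - a) - 1 / c := by
    rw [add_sub_right_comm, add_sub_cancel_right]
    field_simp
    ring
  rw [← hvalue, ← hdiff.tsum_eq, (summable_poch_div_poch_div h).tsum_sub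
    (summable_poch_div_poch_div (by linarith)), digammaSeries, digammaSeries, add_sub_cancel]

lemma digammaSeries_eq_add_natCast_add_sum (hc : ∀ n : ℕ, c ≠ -n) (h : 0 < (c - a).re) (N : ℕ) :
    digammaSeries a c = digammaSeries a (c + N) +
      ∑ j ∈ Finset.range N, (1 / (c - a + j) - 1 / (c + j)) := by
  induction N with
  | zero => simp
  | succ N ih =>
    have hre : 0 < (c + N - a).re := by
      rw [add_sub_right_comm, Complex.add_re, Complex.natCast_re]
      positivity
    rw [ih, digammaSeries_eq_add_one_add (add_natCast_ne_neg_natCast hc N) hre,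
      Finset.sum_range_succ, add_sub_right_comm c, Nat.cast_succ, add_assoc c]
    ring

lemma norm_poch_le_norm_poch_add_natCast (hc : 0 < c.re) (N k : ℕ) :
    ‖poch c k‖ ≤ ‖poch (c + N) k‖ := by
  simp only [poch_eq_prod_range, norm_prod]
  gcongr with j
  rw [← sq_le_sq₀ (norm_nonneg _) (norm_nonneg _), Complex.sq_norm, Complex.sq_norm,
    Complex.normSq_apply, Complex.normSq_apply]
  simp only [Complex.add_re, Complex.add_im, Complex.natCast_re, Complex.natCast_im, add_zero]
  gcongr <;> simp

lemma tendsto_norm_poch_add_natCast (c : ℂ) {k : ℕ} (hk : k ≠ 0) :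
    Tendsto (fun N : ℕ => ‖poch (c + N) k‖) atTop atTop := by
  have hnorm : Tendsto (fun N : ℕ => ‖c + N‖) atTop atTop :=
    tendsto_norm_cobounded_atTop.comp
      ((tendsto_const_add_cobounded c).comp tendsto_natCast_atTop_cobounded)
  have hdeg : 0 < (ascPochhammer ℂ k).degree := by
    rw [← Polynomial.natDegree_pos_iff_degree_pos, ascPochhammer_natDegree]
    exact Nat.pos_of_ne_zero hk
  exact Polynomial.tendsto_norm_atTop _ hdeg hnorm

lemma tendsto_digammaSeries_add_natCast (hc : 0 < c.re) (h : 0 < (c - a).re) :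
    Tendsto (fun N : ℕ => digammaSeries a (c + N)) atTop (𝓝 0) := by
  rw [← tsum_zero (β := ℕ)]
  refine tendsto_tsum_of_dominated_convergence (summable_poch_div_poch_div h).norm
    (fun n => ?_) (.of_forall fun N n => ?_)
  · have hlim := tendsto_norm_poch_add_natCast c n.succ_ne_zero
    rw [tendsto_zero_iff_norm_tendsto_zero]
    simp only [norm_div]
    simpa using (hlim.const_div_atTop ‖poch a (n + 1)‖).div_const ‖(n : ℂ) + 1‖
  · have hpos := norm_pos_iff.2 (poch_ne_zero (ne_neg_natCast_of_re_pos hc) (n + 1))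
    simp only [norm_div]
    gcongr
    exact norm_poch_le_norm_poch_add_natCast hc N (n + 1)

lemma digammaSeries_eq_of_re_pos (hc : 0 < c.re) (h : 0 < (c - a).re) :
    digammaSeries a c = digamma c - digamma (c - a) := by
  have hsum := (tendsto_log_sub_sum_digamma hc).sub (tendsto_log_sub_sum_digamma h)
  have hremainder := (tendsto_add_atTop_iff_nat 1).2 (tendsto_digammaSeries_add_natCast hc h)
  have hlim := hremainder.add hsum
  rw [zero_add] at hlim
  refine tendsto_nhds_unique (tendsto_const_nhds.congr fun n => ?_) hlim
  rw [digammaSeries_eq_add_natCast_add_sum (ne_neg_natCast_of_re_pos hc) h (n + 1),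
    Finset.sum_sub_distrib, sub_sub_sub_cancel_left]

lemma digammaSeries_eq (hc : ∀ n : ℕ, c ≠ -n) (h : 0 < (c - a).re) :
    digammaSeries a c = digamma c - digamma (c - a) := by
  obtain ⟨N, hN⟩ := exists_nat_gt (-c.re)
  induction N generalizing c with
  | zero => exact digammaSeries_eq_of_re_pos (by simpa using hN) h
  | succ N ih =>
    have hcomm : c + 1 - a = c - a + 1 := add_sub_right_comm c 1 a
    rw [digammaSeries_eq_add_one_add hc h, ih (add_one_ne_neg_natCast hc)
        (by rw [hcomm, Complex.add_re, Complex.one_re]; linarith)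
        (by rw [Complex.add_re, Complex.one_re]; push_cast at hN; linarith),
      hcomm, digamma_add_one hc, digamma_add_one (ne_neg_natCast_of_re_pos h)]
    ring

lemma hasSum_poch_div_poch_div (hc : ∀ n : ℕ, c ≠ -n) (h : 0 < (c - a).re) :
    HasSum (fun n : ℕ => poch a (n + 1) / poch c (n + 1) / (n + 1))
      (digamma c - digamma (c - a)) :=
  digammaSeries_eq hc h ▸ (summable_poch_div_poch_div h).hasSum

end DigammaSeries

section MainSeries

variable {a c d : ℂ}

lemma poch_mul_poch_div_eq_add_sum (hd : ∀ n : ℕ, d ≠ -n) (a c : ℂ) (m n : ℕ) :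
    poch a (n + 1) * poch (d + m) (n + 1) / (poch c (n + 1) * poch d (n + 1) * (n + 1 : ℕ)) =
      poch a (n + 1) / poch c (n + 1) / (n + 1) + ∑ j ∈ Finset.range m,
        m.choose (j + 1) / poch d (j + 1) *
          (poch a (n + 1) / poch c (n + 1) * n.descFactorial j) := by
  have hn : (n : ℂ) + 1 ≠ 0 := Nat.cast_add_one_ne_zero n
  have hfactor : poch a (n + 1) * poch (d + m) (n + 1) /
      (poch c (n + 1) * poch d (n + 1) * (n + 1 : ℕ)) =
        poch a (n + 1) / poch c (n + 1) / (n + 1) * (poch (d + m) (n + 1) / poch d (n + 1)) := by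
    push_cast
    field_simp
  rw [hfactor, poch_add_natCast_div_poch hd, Finset.sum_range_succ', mul_add, Finset.mul_sum,
    add_comm]
  congr 1
  · simp [poch_zero]
  · refine Finset.sum_congr rfl fun j _ => ?_
    rw [Nat.succ_descFactorial_succ]
    push_cast
    field_simp

lemma hasSum_poch_mul_poch_div (hc : ∀ n : ℕ, c ≠ -n) (hd : ∀ n : ℕ, d ≠ -n) {m : ℕ}
    (h : m < (c - a).re) :
    HasSum (fun n : ℕ => poch a (n + 1) * poch (d + m) (n + 1) /
        (poch c (n + 1) * poch d (n + 1) * (n + 1 : ℕ)))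
      (digamma c - digamma (c - a) + ∑ j ∈ Finset.range m, m.choose (j + 1) / poch d (j + 1) *
        ((-1) ^ (j + 1) * j.factorial * poch a (j + 1) / poch (1 + a - c) (j + 1))) := by
  simp only [poch_mul_poch_div_eq_add_sum hd]
  refine (hasSum_poch_div_poch_div hc (m.cast_nonneg.trans_lt h)).add
    (hasSum_sum fun j hj => (hasSum_poch_div_poch_mul_descFactorial hc ?_).mul_left _)
  have hjm : (j : ℝ) + 1 ≤ m := by exact_mod_cast Finset.mem_range.1 hj
  exact hjm.trans_lt h

lemma natCast_choose_succ_mul_factorial {m j : ℕ} (h : j < m) :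
    (m.choose (j + 1) * j.factorial : ℂ) =
      m.factorial / ((j + 1 : ℕ) * (m - (j + 1)).factorial) := by
  have hj : ((j + 1 : ℕ) : ℂ) ≠ 0 := Nat.cast_ne_zero.2 j.succ_ne_zero
  have hfact : ((m - (j + 1)).factorial : ℂ) ≠ 0 := Nat.cast_ne_zero.2 (Nat.factorial_ne_zero _)
  rw [eq_div_iff (mul_ne_zero hj hfact), ← Nat.choose_mul_factorial_mul_factorial h,
    Nat.factorial_succ]
  push_cast
  ring

lemma sum_choose_succ_eq_factorial_mul_sum_Icc (a d e : ℂ) (m : ℕ) :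
    ∑ j ∈ Finset.range m, m.choose (j + 1) / poch d (j + 1) *
        ((-1) ^ (j + 1) * j.factorial * poch a (j + 1) / poch e (j + 1)) =
      m.factorial * ∑ k ∈ Finset.Icc 1 m,
        (-1) ^ k * poch a k / (k * (m - k).factorial * poch e k * poch d k) := by
  rw [← Finset.Ico_add_one_right_eq_Icc, Finset.sum_Ico_eq_sum_range, Nat.add_sub_cancel,
    Finset.mul_sum]
  refine Finset.sum_congr rfl fun j hj => ?_
  rw [add_comm 1 j]
  calc m.choose (j + 1) / poch d (j + 1) *
        ((-1) ^ (j + 1) * j.factorial * poch a (j + 1) / poch e (j + 1))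
      = m.choose (j + 1) * j.factorial *
          ((-1) ^ (j + 1) * poch a (j + 1) / (poch e (j + 1) * poch d (j + 1))) := by
        field_simp
    _ = _ := by
        rw [natCast_choose_succ_mul_factorial (Finset.mem_range.1 hj)]
        field_simp

end MainSeries

/-- The `r = 1` case of the extension of Ramanujan's Entry 9: for `Re(c-a) > m`,
`Σ_{k=1}^∞ (a)_k (d+m)_k / ((c)_k (d)_k k)
  = ψ(c) - ψ(c-a) + m! Σ_{k=1}^m (-1)^k (a)_k / (k (m-k)! (1+a-c)_k (d)_k)`. -/
theorem entry9_extension_single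
    (m : ℕ) (hm : 0 < m)
    (a c d : ℂ)
    (hre : (c - a).re > (m : ℝ))
    (hc : ∀ n : ℕ, c ≠ -(n : ℂ))
    (hca : ∀ n : ℕ, c - a ≠ -(n : ℂ))
    (hd : ∀ n : ℕ, d ≠ -(n : ℂ))
    (hac : ∀ k, 1 ≤ k → k ≤ m → poch (1 + a - c) k ≠ 0) :
    ∑' k : ℕ, poch a (k + 1) * poch (d + (m : ℂ)) (k + 1) /
        (poch c (k + 1) * poch d (k + 1) * ((k + 1 : ℕ) : ℂ))
      = digamma c - digamma (c - a) +
        (Nat.factorial m : ℂ) *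
          ∑ k ∈ Finset.Icc 1 m,
            (-1 : ℂ) ^ k * poch a k /
              ((k : ℂ) * (Nat.factorial (m - k) : ℂ) * poch (1 + a - c) k * poch d k) := by
  rw [← sum_choose_succ_eq_factorial_mul_sum_Icc]
  exact (hasSum_poch_mul_poch_div hc hd hre).tsum_eq
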